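/- arXiv:1907.05999 — 2 statements merged into one kernel-verified Lean document; each statement's English description precedes it below -/
import Mathlib

section
/- Let D be a lattice in ℳ(𝔽). Then there exists a τ-stable lattice L in N₀ such that either pL^∨ ⊆ pD^∨ ⊆ D ⊆ L ⊆ L^∨ ⊆ D^∨, or pD^∨ ⊆ pL^∨ ⊆ L ⊆ D ⊆ D^∨ ⊆ L^∨. -/
open Pointwise

noncomputable section

variable (p : ℕ) [Fact p.Prime] (𝔽 : Type) [Field 𝔽] [IsAlgClosed 𝔽] [CharP 𝔽 p]

/-- The Witt ring `W(𝔽)`. -/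
abbrev Wp := WittVector p 𝔽

/-- The fraction field `K` of `W(𝔽)`. -/
abbrev Kp := FractionRing (Wp p 𝔽)

/-- `N₀ = K⁴`. -/
abbrev N0 := Fin 4 → Kp p 𝔽

/-- The symplectic form on `N₀`. -/
def omegaForm (x y : N0 p 𝔽) : Kp p 𝔽 :=
  x 0 * y 3 - x 3 * y 0 + x 1 * y 2 - x 2 * y 1

/-- The dual lattice of a `W`-submodule of `N₀`. -/
def dualL (D : Submodule (Wp p 𝔽) (N0 p 𝔽)) : Submodule (Wp p 𝔽) (N0 p 𝔽) where
  carrier := {x | ∀ d ∈ D, omegaForm p 𝔽 x d ∈ (algebraMap (Wp p 𝔽) (Kp p 𝔽)).range}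
  zero_mem' := by
    intro d hd
    have : omegaForm p 𝔽 0 d = 0 := by simp [omegaForm]
    rw [this]; exact zero_mem _
  add_mem' := by
    intro x y hx hy d hd
    have : omegaForm p 𝔽 (x + y) d = omegaForm p 𝔽 x d + omegaForm p 𝔽 y d := by
      simp [omegaForm]; ring
    rw [this]; exact add_mem (hx d hd) (hy d hd)
  smul_mem' := by
    intro c x hx d hd
    have : omegaForm p 𝔽 (c • x) d
        = algebraMap (Wp p 𝔽) (Kp p 𝔽) c * omegaForm p 𝔽 x d := by
      simp [omegaForm, Algebra.smul_def]; ring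
    rw [this]; exact mul_mem ⟨c, rfl⟩ (hx d hd)

variable (σ : Kp p 𝔽 ≃+* Kp p 𝔽)

/-- The semilinear map `τ` on `N₀`, applying `σ` to each coordinate. -/
def tauFun (x : N0 p 𝔽) : N0 p 𝔽 := fun i => σ (x i)

/-- The lattice `τD` generated by the image of `D` under `τ`. -/
def tauL (D : Submodule (Wp p 𝔽) (N0 p 𝔽)) : Submodule (Wp p 𝔽) (N0 p 𝔽) :=
  Submodule.span (Wp p 𝔽) (tauFun p 𝔽 σ '' D)

/-- `D` is a lattice in `N₀`: finitely generated over `W` and spanning `N₀` over `K`. -/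
def IsLattice (D : Submodule (Wp p 𝔽) (N0 p 𝔽)) : Prop :=
  D.FG ∧ Submodule.span (Kp p 𝔽) (D : Set (N0 p 𝔽)) = ⊤

/-- The length of the `W`-module `B / A` (as the Krull dimension of its submodule
lattice). -/
def relLength (A B : Submodule (Wp p 𝔽) (N0 p 𝔽)) : WithBot ℕ∞ :=
  Order.krullDim (Submodule (Wp p 𝔽) (B ⧸ (A.comap B.subtype)))

/-- `A ⊂ᵈ B` : `A ⊆ B` with colength `d`. -/
def SubD (d : ℕ) (A B : Submodule (Wp p 𝔽) (N0 p 𝔽)) : Prop :=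
  A ≤ B ∧ relLength p 𝔽 A B = (d : WithBot ℕ∞)

/-- Membership in `ℳ(𝔽)`. -/
def memM (D : Submodule (Wp p 𝔽) (N0 p 𝔽)) : Prop :=
  IsLattice p 𝔽 D ∧
  SubD p 𝔽 2 ((p : Wp p 𝔽) • dualL p 𝔽 D) D ∧
  SubD p 𝔽 2 D (dualL p 𝔽 D) ∧
  SubD p 𝔽 2 ((p : Wp p 𝔽) • dualL p 𝔽 D) (tauL p 𝔽 σ D) ∧
  SubD p 𝔽 2 (tauL p 𝔽 σ D) (dualL p 𝔽 D) ∧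
  relLength p 𝔽 D (D ⊔ tauL p 𝔽 σ D) ≤ 1

/-- `σ` is the automorphism of `K` induced by the Witt-vector Frobenius. -/
def IsWittFrobenius : Prop :=
  ∀ w : Wp p 𝔽, σ (algebraMap (Wp p 𝔽) (Kp p 𝔽) w)
    = algebraMap (Wp p 𝔽) (Kp p 𝔽) (WittVector.frobeniusEquiv p 𝔽 w)

/-!
The theorem is a statement about the ordered set of all `W`-lattices in `N₀`, with the
order-reversing involution `δ : L ↦ L^∨` and the commuting automorphisms `π : L ↦ pL` and `τ`.

Suppose `D ≠ τD`. Since `D` and `τD` both lie between `pD^∨` and `D^∨`, the lattice `D + τD` is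
self-dual and has colength one in `D^∨`, while `D ∩ τD` is self-dual for `π ∘ δ` and has colength
one in `D`. If either is `τ`-stable, it is the required `L`. Otherwise
`(D + τD) + τ(D + τD) = τ(D^∨)` and `(D ∩ τD) + τ(D ∩ τD) = τD`. The first identity shows that a
`τ`-stable lattice `L ⊇ D` contains `D^∨` and `(τD)^∨`, so that `L^∨ ⊆ D ∩ τD` and
`D ∩ τD = p(D ∩ τD)^∨ ⊆ pL`; the second then gives `D ⊆ pL`. As `pL` is again `τ`-stable, this can
be iterated, and `D` would lie in every lattice: a contradiction.
-/

open OrderDual Function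

section Order

/-- The interval `[a, b]` has length at most two: it contains no chain `a < x < y < b`. -/
def LengthLETwo {α : Type*} [Preorder α] (a b : α) : Prop :=
  ∀ ⦃x y : α⦄, a < x → x < y → ¬ y < b

namespace LengthLETwo

theorem covBy_left {α : Type*} [Preorder α] {a b x : α} (h : LengthLETwo a b)
    (hax : a < x) (hxb : x < b) : a ⋖ x :=
  ⟨hax, fun _ haz hzx => h haz hzx hxb⟩

theorem covBy_right {α : Type*} [Preorder α] {a b x : α} (h : LengthLETwo a b)
    (hax : a < x) (hxb : x < b) : x ⋖ b :=
  ⟨hxb, fun _ hxz hzb => h hax hxz hzb⟩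

theorem toDual {α : Type*} [Preorder α] {a b : α} (h : LengthLETwo a b) :
    LengthLETwo (toDual b) (toDual a) :=
  fun _ _ hbx hxy hya => h hya hxy hbx

theorem map {α β : Type*} [Preorder α] [Preorder β] {a b : α} (h : LengthLETwo a b)
    (t : α ≃o β) : LengthLETwo (t a) (t b) := by
  intro x y hax hxy hyb
  exact h (t.lt_symm_apply.2 hax) (t.symm.strictMono hxy) (t.symm_apply_lt.2 hyb)

end LengthLETwo

theorem map_eq_of_map_le {α : Type*} [PartialOrder α] {δ : α → α}
    (hδ : StrictAnti δ) {t : α ≃o α} {a : α} (htδ : t (δ a) = δ (t a)) (ha : a ≤ δ a)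
    (hlen : LengthLETwo a (δ a)) (hle : t a ≤ a) : t a = a := by
  by_contra hne
  have hlt : t a < a := lt_of_le_of_ne hle hne
  obtain hself | ha := ha.eq_or_lt
  · have : t a = δ (t a) := by rw [← htδ, ← hself]
    exact (hlt.trans_le (hself.le.trans (hδ hlt).le)).ne this
  · exact hlen.map t hlt ha (htδ ▸ hδ hlt)

section Lattice

variable {α : Type*} [Lattice α] {δ : α → α} {a b : α}

theorem sup_selfDual_and_covBy (hδ : StrictAnti δ) (hδδ : Involutive δ) (ha : a ≤ δ a)
    (hb : b ≤ δ b) (hba : b ≤ δ a) (hlen : LengthLETwo a (δ a)) (hnle : ¬ b ≤ a) :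
    δ (a ⊔ b) = a ⊔ b ∧ a ⋖ a ⊔ b ∧ a ⊔ b ⋖ δ a := by
  have hab : a ≤ δ b := by simpa only [hδδ a] using hδ.antitone hba
  have hlt : a < a ⊔ b := left_lt_sup.2 hnle
  have hle : a ⊔ b ≤ δ (a ⊔ b) := by
    apply sup_le
    · simpa only [hδδ a] using hδ.antitone (sup_le ha hba)
    · simpa only [hδδ b] using hδ.antitone (sup_le hab hb)
  have hself : a ⊔ b = δ (a ⊔ b) := hle.eq_of_not_lt fun h => hlen hlt h (hδ hlt)
  have hlt' : a ⊔ b < δ a := hself.trans_lt (hδ hlt)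
  exact ⟨hself.symm, hlen.covBy_left hlt hlt', hlen.covBy_right hlt hlt'⟩

theorem sup_sup_map_sup_eq (hδ : StrictAnti δ) (hδδ : Involutive δ) {t : α ≃o α}
    (htδ : ∀ x, t (δ x) = δ (t x)) (ha : a ≤ δ a) (hta : t a ≤ δ a)
    (hlen : LengthLETwo a (δ a)) (hnle : ¬ t a ≤ a) (hnge : ¬ a ≤ t a)
    (hne : t (a ⊔ t a) ≠ a ⊔ t a) : a ⊔ t a ⊔ t (a ⊔ t a) = t (δ a) := by
  have hta' : t a ≤ δ (t a) := htδ a ▸ t.monotone ha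
  have hat : a ≤ δ (t a) := by simpa only [hδδ a] using hδ.antitone hta
  have hlen' : LengthLETwo (t a) (δ (t a)) := htδ a ▸ hlen.map t
  obtain ⟨-, -, hcov⟩ := sup_selfDual_and_covBy hδ hδδ ha hta' hta hlen hnle
  obtain ⟨-, -, hcov'⟩ := sup_selfDual_and_covBy hδ hδδ hta' ha hat hlen' hnge
  rw [sup_comm, ← htδ] at hcov'
  exact hcov'.wcovBy.sup_eq ((apply_covBy_apply_iff t).2 hcov).wcovBy hne.symm

theorem inf_selfDual_and_covBy (hδ : StrictAnti δ) (hδδ : Involutive δ) (ha : δ a ≤ a)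
    (hb : δ b ≤ b) (hba : δ a ≤ b) (hlen : LengthLETwo (δ a) a) (hnle : ¬ a ≤ b) :
    δ (a ⊓ b) = a ⊓ b ∧ a ⊓ b ⋖ a := by
  have hδ' : StrictAnti (toDual ∘ δ ∘ ofDual) := hδ.dual
  have hδδ' : Involutive (toDual ∘ δ ∘ ofDual) := fun x => congrArg toDual (hδδ (ofDual x))
  obtain ⟨hself, hcov, -⟩ := @sup_selfDual_and_covBy αᵒᵈ _ _ (toDual a) (toDual b)
    hδ' hδδ' ha hb hba hlen.toDual hnle
  exact ⟨toDual.injective hself, hcov.ofDual⟩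

theorem inf_sup_map_inf_eq (hδ : StrictAnti δ) (hδδ : Involutive δ) {t : α ≃o α}
    (htδ : ∀ x, t (δ x) = δ (t x)) (ha : δ a ≤ a) (hta : δ a ≤ t a)
    (hlen : LengthLETwo (δ a) a) (hnle : ¬ t a ≤ a) (hnge : ¬ a ≤ t a)
    (hne : t (a ⊓ t a) ≠ a ⊓ t a) : a ⊓ t a ⊔ t (a ⊓ t a) = t a := by
  have hta' : δ (t a) ≤ t a := htδ a ▸ t.monotone ha
  have hat : δ (t a) ≤ a := by simpa only [hδδ a] using hδ.antitone hta
  have hlen' : LengthLETwo (δ (t a)) (t a) := htδ a ▸ hlen.map t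
  obtain ⟨-, hcov⟩ := inf_selfDual_and_covBy hδ hδδ ha hta' hta hlen hnge
  obtain ⟨-, hcov'⟩ := inf_selfDual_and_covBy hδ hδδ hta' ha hat hlen' hnle
  rw [inf_comm] at hcov'
  exact hcov'.wcovBy.sup_eq ((apply_covBy_apply_iff t).2 hcov).wcovBy hne.symm

theorem le_map_of_fixed_le (hδ : StrictAnti δ) (hδδ : Involutive δ) {π t : α ≃o α}
    (htδ : ∀ x, t (δ x) = δ (t x)) (htπ : ∀ x, t (π x) = π (t x)) {x : α}
    (hsup : a ⊔ t a ⊔ t (a ⊔ t a) = t (δ a)) (hself : π (δ (a ⊓ t a)) = a ⊓ t a)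
    (hinf : a ⊓ t a ⊔ t (a ⊓ t a) = t a) (hx : t x = x) (hax : a ≤ x) : a ≤ π x := by
  have hta : t a ≤ x := hx ▸ t.monotone hax
  have hδa : δ a ≤ x := by
    rw [← t.le_iff_le, hx, ← hsup]
    have h := sup_le hax hta
    exact sup_le h (hx ▸ t.monotone h)
  have htδa : δ (t a) ≤ x := by
    rw [← htδ, ← hx]
    exact t.monotone hδa
  have hδinf : δ (a ⊓ t a) ≤ x := by
    rw [← hδδ x]
    apply hδ.antitone
    apply le_inf
    · rw [← hδδ a]
      exact hδ.antitone hδa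
    · rw [← hδδ (t a)]
      exact hδ.antitone htδa
  have hπx : t (π x) = π x := by rw [htπ, hx]
  have hinfx : a ⊓ t a ≤ π x := hself ▸ π.monotone hδinf
  rw [← t.le_iff_le, hπx, ← hinf]
  exact sup_le hinfx (hπx ▸ t.monotone hinfx)

theorem isBot_of_forall_fixed_le_map {π t : α ≃o α} (htπ : ∀ x, t (π x) = π (t x))
    (harch : ∀ x y, ∃ n : ℕ, π^[n] x ≤ y) (hfix : ∃ c, t c = c)
    (h : ∀ x, t x = x → a ≤ x → a ≤ π x) : IsBot a := by
  have le_of_iterate_le (n : ℕ) : ∀ x, t x = x → π^[n] a ≤ x → a ≤ x := by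
    induction n with
    | zero => exact fun x _ => id
    | succ n ih =>
      intro x hx hle
      have hx' : t (π.symm x) = π.symm x := by
        rw [← π.injective.eq_iff, ← htπ, π.apply_symm_apply, hx]
      rw [iterate_succ_apply', ← π.le_symm_apply] at hle
      simpa only [π.apply_symm_apply] using h _ hx' (ih _ hx' hle)
  intro y
  obtain ⟨c, hc⟩ := hfix
  obtain ⟨m, hm⟩ := harch c y
  have hcm : t (π^[m] c) = π^[m] c := by
    rw [(Commute.iterate_right htπ m).eq, hc]
  obtain ⟨n, hn⟩ := harch a (π^[m] c)
  exact (le_of_iterate_le n _ hcm hn).trans hm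

theorem exists_fixed_le_dual_or_dual_le (hδ : StrictAnti δ) (hδδ : Involutive δ)
    {π t : α ≃o α} (hπδ : ∀ x, π (δ (π x)) = δ x) (htδ : ∀ x, t (δ x) = δ (t x))
    (htπ : ∀ x, t (π x) = π (t x)) (harch : ∀ x y, ∃ n : ℕ, π^[n] x ≤ y) (hfix : ∃ c, t c = c)
    (ha : a ≤ δ a) (hπa : π (δ a) ≤ a) (hta : t a ≤ δ a) (hπta : π (δ a) ≤ t a)
    (hlen : LengthLETwo a (δ a)) (hlen' : LengthLETwo (π (δ a)) a) :
    ∃ l, t l = l ∧ (a ≤ l ∧ l ≤ δ l ∨ l ≤ a ∧ π (δ l) ≤ l) := by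
  by_contra! hno
  have hself : t a ≠ a := fun h => (hno a h).1 le_rfl ha
  have hnle : ¬ t a ≤ a := fun h => hself (map_eq_of_map_le hδ (htδ a) ha hlen h)
  have hnge : ¬ a ≤ t a := by
    intro h
    have hsymm : t.symm (δ a) = δ (t.symm a) := by
      rw [t.symm_apply_eq, htδ, t.apply_symm_apply]
    have := map_eq_of_map_le hδ hsymm ha hlen (t.symm_apply_le.2 h)
    exact hself (t.symm_apply_eq.1 this).symm
  have hta' : t a ≤ δ (t a) := htδ a ▸ t.monotone ha
  obtain ⟨hδsup, -⟩ := sup_selfDual_and_covBy hδ hδδ ha hta' hta hlen hnle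
  have hsup := sup_sup_map_sup_eq hδ hδδ htδ ha hta hlen hnle hnge
    fun h => (hno _ h).1 le_sup_left hδsup.ge
  have hπδ_anti : StrictAnti (π ∘ δ) := π.strictMono.comp_strictAnti hδ
  have hπδ_inv : Involutive (π ∘ δ) := fun x => (hπδ (δ x)).trans (hδδ x)
  have htπδ (x : α) : t ((π ∘ δ) x) = (π ∘ δ) (t x) := by simp only [comp_apply, htπ, htδ]
  have hπta' : (π ∘ δ) (t a) ≤ t a := htπδ a ▸ t.monotone hπa
  obtain ⟨hπδinf, -⟩ := inf_selfDual_and_covBy hπδ_anti hπδ_inv hπa hπta' hπta hlen' hnge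
  have hinf := inf_sup_map_inf_eq hπδ_anti hπδ_inv htπδ hπa hπta hlen' hnle hnge
    fun h => (hno _ h).2 inf_le_left hπδinf.le
  exact hnge (isBot_of_forall_fixed_le_map htπ harch hfix
    (fun _ => le_map_of_fixed_le hδ hδδ htδ htπ hsup hπδinf hinf) (t a))

end Lattice
end Order

section Length

variable {R M : Type*} [Ring R] [AddCommGroup M] [Module R M]

theorem lengthLETwo_of_length_quotient_le {A B : Submodule R M}
    (hlen : Module.length R (B ⧸ A.submoduleOf B) ≤ 2) : LengthLETwo A B := by
  intro X Y hAX hXY hYB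
  have hXB : X ≤ B := hXY.le.trans hYB.le
  have submoduleOf_lt {P Q : Submodule R M} (hP : P ≤ B) (hQ : Q ≤ B) (hPQ : P < Q) :
      P.submoduleOf B < Q.submoduleOf B :=
    B.mapIic.symm.strictMono (show (⟨P, hP⟩ : Set.Iic B) < ⟨Q, hQ⟩ from hPQ)
  have hA := submoduleOf_lt (hAX.le.trans hXB) hXB hAX
  have hX := submoduleOf_lt hXB hYB.le hXY
  have hY := submoduleOf_lt hYB.le le_rfl hYB
  rw [Module.length_quotient] at hlen
  have h3 : (3 : ℕ∞) ≤ Order.coheight (A.submoduleOf B) := calc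
    (3 : ℕ∞) = 0 + 1 + 1 + 1 := by norm_num
    _ ≤ Order.coheight (B.submoduleOf B) + 1 + 1 + 1 := by gcongr; exact zero_le
    _ ≤ Order.coheight (Y.submoduleOf B) + 1 + 1 := by
      gcongr; exact Order.coheight_add_one_le hY
    _ ≤ Order.coheight (X.submoduleOf B) + 1 := by gcongr; exact Order.coheight_add_one_le hX
    _ ≤ Order.coheight (A.submoduleOf B) := Order.coheight_add_one_le hA
  exact absurd (h3.trans hlen) (by decide)

end Length

section Submodule

variable {R V : Type*} [CommRing R] [AddCommGroup V] [Module R V]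

theorem map_smul_submodule {φ : R →+* R} [RingHomSurjective φ] (f : V →ₛₗ[φ] V) (r : R)
    (L : Submodule R V) : (r • L).map f = φ r • L.map f :=
  SetLike.coe_injective (image_smul_setₛₗ f r (L : Set V))

theorem smul_submodule_eq_of_associated [IsDomain R] {a b : R} (h : Associated a b)
    (L : Submodule R V) : a • L = b • L := by
  rw [← Submodule.ideal_span_singleton_smul, Ideal.span_singleton_eq_span_singleton.2 h,
    Submodule.ideal_span_singleton_smul]

variable {K : Type*} [Field K] [Algebra R K] [Module K V] [IsScalarTower R K V]

theorem dualSubmodule_map {φ ψ : R →+* R} [RingHomInvPair φ ψ] [RingHomInvPair ψ φ]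
    {B : LinearMap.BilinForm K V} {e : V ≃ₛₗ[φ] V}
    (he : ∀ x y, B (e x) (e y) ∈ (1 : Submodule R K) ↔ B x y ∈ (1 : Submodule R K))
    (L : Submodule R V) :
    B.dualSubmodule (L.map (e : V →ₛₗ[φ] V)) = (B.dualSubmodule L).map (e : V →ₛₗ[φ] V) := by
  ext x
  obtain ⟨x, rfl⟩ := e.surjective x
  have hx : x ∈ B.dualSubmodule L ↔ e x ∈ B.dualSubmodule (L.map (e : V →ₛₗ[φ] V)) := by
    simp only [LinearMap.BilinForm.mem_dualSubmodule, Submodule.mem_map, forall_exists_index,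
      and_imp, forall_apply_eq_imp_iff₂, LinearEquiv.coe_coe, he]
  rw [← hx]
  exact (e.injective.mem_set_image (s := (B.dualSubmodule L : Set V))).symm

theorem smul_dualSubmodule_smul [FaithfulSMul R K] (B : LinearMap.BilinForm K V) {r : R}
    (hr : r ≠ 0) (L : Submodule R V) : r • B.dualSubmodule (r • L) = B.dualSubmodule L := by
  have hrK : algebraMap R K r ≠ 0 := by simpa using hr
  have hmem (x : V) : x ∈ B.dualSubmodule (r • L) ↔ r • x ∈ B.dualSubmodule L := by
    simp only [LinearMap.BilinForm.mem_dualSubmodule, Submodule.mem_smul_pointwise_iff_exists,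
      forall_exists_index, and_imp, forall_apply_eq_imp_iff₂, ← algebraMap_smul K r, map_smul,
      LinearMap.smul_apply]
  ext x
  rw [Submodule.mem_smul_pointwise_iff_exists]
  constructor
  · rintro ⟨y, hy, rfl⟩
    exact (hmem y).1 hy
  · intro hx
    have hrx : r • (algebraMap R K r)⁻¹ • x = x := by
      rw [← algebraMap_smul K r, smul_inv_smul₀ hrK]
    exact ⟨_, (hmem _).2 (hrx.symm ▸ hx), hrx⟩

end Submodule

section FullLattice

variable {R K V : Type*} [CommRing R] [Field K] [Algebra R K] [AddCommGroup V]
  [Module R V] [Module K V] [IsScalarTower R K V]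

section FractionRing

theorem isLattice_span_range_basis {ι : Type*} [Finite ι] (b : Module.Basis ι K V) :
    Submodule.IsLattice K (Submodule.span R (Set.range b)) :=
  ⟨Submodule.fg_span (Set.finite_range b), by
    rw [Submodule.span_span_of_tower, b.span_eq]⟩

variable [IsFractionRing R K]

theorem exists_ne_zero_smul_mem {L : Submodule R V} (hL : Submodule.span K (L : Set V) = ⊤)
    (x : V) : ∃ r : R, r ≠ 0 ∧ r • x ∈ L := by
  have : Nontrivial R := (algebraMap R K).domain_nontrivial
  obtain ⟨⟨r, hr⟩, hrx⟩ := multiple_mem_span_of_mem_localization_span (nonZeroDivisors R) K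
    (L : Set V) x (hL ▸ Submodule.mem_top)
  exact ⟨r, nonZeroDivisors.ne_zero hr, by rwa [Submodule.span_eq] at hrx⟩

theorem exists_pow_smul_le [IsDomain R] [IsDiscreteValuationRing R] {ϖ : R}
    (hϖ : Irreducible ϖ) {L M : Submodule R V} (hM : Submodule.span K (M : Set V) = ⊤)
    (hL : L.FG) : ∃ n : ℕ, ϖ ^ n • L ≤ M := by
  induction L, hL using Submodule.fg_induction with
  | singleton x =>
    obtain ⟨r, hr, hrx⟩ := exists_ne_zero_smul_mem hM x
    obtain ⟨n, hn⟩ := IsDiscreteValuationRing.associated_pow_irreducible hr hϖ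
    refine ⟨n, ?_⟩
    rwa [← smul_submodule_eq_of_associated hn, Submodule.smul_span, Set.smul_set_singleton,
      Submodule.span_singleton_le_iff_mem]
  | sup L₁ L₂ _ _ ih₁ ih₂ =>
    obtain ⟨m, hm⟩ := ih₁
    obtain ⟨n, hn⟩ := ih₂
    refine ⟨m + n, ?_⟩
    rw [Submodule.smul_sup', pow_add]
    apply sup_le
    · rw [mul_comm, mul_smul]
      exact (smul_mono_right _ hm).trans (Submodule.smul_le_self_of_tower _ _)
    · rw [mul_smul]
      exact (smul_mono_right _ hn).trans (Submodule.smul_le_self_of_tower _ _)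

theorem isLattice_of_fg_of_exists_smul_mem {L : Submodule R V} (hfg : L.FG)
    (h : ∀ x : V, ∃ r : R, r ≠ 0 ∧ r • x ∈ L) : Submodule.IsLattice K L := by
  refine ⟨hfg, eq_top_iff.2 fun x _ => ?_⟩
  obtain ⟨r, hr, hrx⟩ := h x
  have hrK : algebraMap R K r ≠ 0 := by simpa using hr
  rw [← (Submodule.span K (L : Set V)).smul_mem_iff hrK, algebraMap_smul]
  exact Submodule.subset_span hrx

theorem isLattice_map {φ ψ : R →+* R} [RingHomInvPair φ ψ] [RingHomInvPair ψ φ]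
    (e : V ≃ₛₗ[φ] V) {L : Submodule R V} (hL : Submodule.IsLattice K L) :
    Submodule.IsLattice K (L.map (e : V →ₛₗ[φ] V)) := by
  refine isLattice_of_fg_of_exists_smul_mem (hL.fg.map _) fun x => ?_
  obtain ⟨r, hr, hrx⟩ := exists_ne_zero_smul_mem hL.span_eq_top (e.symm x)
  have hφ : Injective φ := (RingHomInvPair.toRingEquiv φ ψ).injective
  refine ⟨φ r, (map_ne_zero_iff φ hφ).2 hr, e.symm (φ r • x), ?_, e.apply_symm_apply _⟩
  rwa [e.symm.map_smulₛₗ, RingHomInvPair.comp_apply_eq]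

end FractionRing

variable (R K V) in
/-- The `R`-lattices in the `K`-vector space `V`, as a partially ordered set. -/
abbrev FullLattice : Type _ := {L : Submodule R V // Submodule.IsLattice K L}

namespace FullLattice

instance [IsDomain R] [IsPrincipalIdealRing R] [IsFractionRing R K] [Module.Finite K V] :
    Lattice (FullLattice R K V) :=
  Subtype.lattice (fun _ _ _ _ => Submodule.IsLattice.sup K _ _)
    (fun _ _ _ _ => Submodule.IsLattice.inf K _ _)

section Map

variable [IsFractionRing R K] {φ ψ : R →+* R} [RingHomInvPair φ ψ]
  [RingHomInvPair ψ φ]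

/-- The automorphism `L ↦ e(L)` of the poset of lattices, for a semilinear automorphism `e`
of `V`. -/
def mapOrderIso (e : V ≃ₛₗ[φ] V) : FullLattice R K V ≃o FullLattice R K V where
  toFun L := ⟨L.1.map (e : V →ₛₗ[φ] V), isLattice_map e L.2⟩
  invFun L := ⟨L.1.map (e.symm : V →ₛₗ[ψ] V), isLattice_map e.symm L.2⟩
  left_inv L := Subtype.ext (by simp [← Submodule.map_comp])
  right_inv L := Subtype.ext (by simp [← Submodule.map_comp])
  map_rel_iff' := (Submodule.orderIsoMapComap e).le_iff_le

end Map

section Dual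

variable [IsDomain R] [IsPrincipalIdealRing R] [IsFractionRing R K]
  {B : LinearMap.BilinForm K V}

theorem exists_basis (L : FullLattice R K V) :
    ∃ (n : ℕ) (b : Module.Basis (Fin n) K V), Submodule.span R (Set.range b) = L.1 := by
  have := L.2
  let b := Module.finBasis R L.1
  refine ⟨_, b.extendOfIsLattice K, ?_⟩
  have hrange : Set.range (b.extendOfIsLattice K) = L.1.subtype '' Set.range b := by
    rw [← Set.range_comp]
    exact congrArg Set.range (funext fun i => b.extendOfIsLattice_apply K i)
  rw [hrange, ← Submodule.map_span, b.span_eq, Submodule.map_subtype_top]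

theorem isLattice_dualSubmodule (hB : B.Nondegenerate) (L : FullLattice R K V) :
    Submodule.IsLattice K (B.dualSubmodule L.1) := by
  obtain ⟨n, b, hb⟩ := L.exists_basis
  rw [← hb, LinearMap.BilinForm.dualSubmodule_span_of_basis B hB b]
  exact isLattice_span_range_basis _

/-- The dual lattice `L^∨` with respect to a nondegenerate bilinear form. -/
def dual (hB : B.Nondegenerate) (L : FullLattice R K V) : FullLattice R K V :=
  ⟨B.dualSubmodule L.1, L.isLattice_dualSubmodule hB⟩

theorem dual_antitone (hB : B.Nondegenerate) :
    Antitone (dual hB : FullLattice R K V → FullLattice R K V) :=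
  fun _ _ hLM _ hx y hy => hx y (hLM hy)

theorem dual_involutive (hB : B.Nondegenerate)
    (hrefl : ∀ x y, B x y ∈ (1 : Submodule R K) → B y x ∈ (1 : Submodule R K)) :
    Involutive (dual hB : FullLattice R K V → FullLattice R K V) := by
  intro L
  obtain ⟨n, b, hb⟩ := L.exists_basis
  have hflip (N : Submodule R V) : B.dualSubmodule N = B.flip.dualSubmodule N :=
    le_antisymm (fun x hx y hy => hrefl x y (hx y hy)) (fun x hx y hy => hrefl y x (hx y hy))
  apply Subtype.ext
  change B.dualSubmodule (B.dualSubmodule L.1) = L.1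
  rw [hflip, ← hb, LinearMap.BilinForm.dualSubmodule_flip_dualSubmodule_of_basis B hB b]

theorem dual_strictAnti (hB : B.Nondegenerate)
    (hrefl : ∀ x y, B x y ∈ (1 : Submodule R K) → B y x ∈ (1 : Submodule R K)) :
    StrictAnti (dual hB : FullLattice R K V → FullLattice R K V) :=
  (dual_antitone hB).strictAnti_of_injective (dual_involutive hB hrefl).injective

theorem mapOrderIso_dual {φ ψ : R →+* R} [RingHomInvPair φ ψ] [RingHomInvPair ψ φ]
    (hB : B.Nondegenerate) {e : V ≃ₛₗ[φ] V}
    (he : ∀ x y, B (e x) (e y) ∈ (1 : Submodule R K) ↔ B x y ∈ (1 : Submodule R K))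
    (L : FullLattice R K V) : mapOrderIso e (dual hB L) = dual hB (mapOrderIso e L) :=
  Subtype.ext (dualSubmodule_map he L.1).symm

end Dual

section Scale

variable [IsFractionRing R K] {r : R}

/-- The automorphism `L ↦ rL` of the poset of lattices. -/
def scale (hr : r ≠ 0) : FullLattice R K V ≃o FullLattice R K V :=
  mapOrderIso ((LinearEquiv.smulOfNeZero K V (algebraMap R K r)
    (by simpa using hr)).restrictScalars R)

theorem coe_scale (hr : r ≠ 0) (L : FullLattice R K V) : (scale hr L).1 = r • L.1 := by
  apply SetLike.coe_injective
  exact Set.image_congr fun x _ => algebraMap_smul K r x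

theorem coe_iterate_scale (hr : r ≠ 0) (n : ℕ) (L : FullLattice R K V) :
    ((scale hr)^[n] L).1 = r ^ n • L.1 := by
  induction n with
  | zero => rw [iterate_zero, id, pow_zero, one_smul]
  | succ n ih => rw [iterate_succ_apply', coe_scale, ih, pow_succ', mul_smul]

theorem scale_dual_scale [IsDomain R] [IsPrincipalIdealRing R] {B : LinearMap.BilinForm K V}
    (hB : B.Nondegenerate) (hr : r ≠ 0) (L : FullLattice R K V) :
    scale hr (dual hB (scale hr L)) = dual hB L := by
  refine Subtype.ext ?_
  rw [coe_scale]
  change r • B.dualSubmodule (scale hr L).1 = B.dualSubmodule L.1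
  rw [coe_scale, smul_dualSubmodule_smul B hr]

theorem exists_iterate_scale_le [IsDomain R] [IsDiscreteValuationRing R] (hr : Irreducible r)
    (L M : FullLattice R K V) : ∃ n : ℕ, (scale hr.ne_zero)^[n] L ≤ M := by
  obtain ⟨n, hn⟩ := exists_pow_smul_le hr M.2.span_eq_top L.2.fg
  exact ⟨n, (coe_iterate_scale hr.ne_zero n L).trans_le hn⟩

theorem mapOrderIso_scale [IsDomain R] [IsDiscreteValuationRing R] (hr : Irreducible r)
    {φ ψ : R →+* R} [RingHomInvPair φ ψ] [RingHomInvPair ψ φ] (e : V ≃ₛₗ[φ] V)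
    (L : FullLattice R K V) :
    mapOrderIso e (scale hr.ne_zero L) = scale hr.ne_zero (mapOrderIso e L) := by
  have hφr : Irreducible (φ r) :=
    (MulEquiv.irreducible_iff (RingHomInvPair.toRingEquiv φ ψ)).2 hr
  refine Subtype.ext ?_
  change (scale hr.ne_zero L).1.map (e : V →ₛₗ[φ] V) = _
  rw [coe_scale, coe_scale, map_smul_submodule,
    smul_submodule_eq_of_associated (IsDiscreteValuationRing.associated_of_irreducible R hφr hr)]
  rfl

end Scale

theorem lengthLETwo {L M : FullLattice R K V}
    (hlen : Module.length R (M.1 ⧸ L.1.submoduleOf M.1) ≤ 2) : LengthLETwo L M :=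
  fun _ _ hLX hXY hYM => lengthLETwo_of_length_quotient_le hlen hLX hXY hYM

end FullLattice
end FullLattice

theorem crucial_lemma_quaternionic_general {R K V : Type*} [CommRing R] [IsDomain R]
    [IsDiscreteValuationRing R] [Field K] [Algebra R K] [IsFractionRing R K] [AddCommGroup V]
    [Module R V] [Module K V] [IsScalarTower R K V] [Module.Finite K V]
    {ϖ : R} (hϖ : Irreducible ϖ) {B : LinearMap.BilinForm K V} (hB : B.Nondegenerate)
    (hrefl : ∀ x y, B x y ∈ (1 : Submodule R K) → B y x ∈ (1 : Submodule R K))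
    {φ ψ : R →+* R} [RingHomInvPair φ ψ] [RingHomInvPair ψ φ] (τ : V ≃ₛₗ[φ] V)
    (hτ : ∀ x y, B (τ x) (τ y) ∈ (1 : Submodule R K) ↔ B x y ∈ (1 : Submodule R K))
    {Λ : Submodule R V} (hΛ : Submodule.IsLattice K Λ) (hτΛ : Λ.map (τ : V →ₛₗ[φ] V) = Λ)
    {D : Submodule R V} (hD : Submodule.IsLattice K D)
    (hle : D ≤ B.dualSubmodule D)
    (hlen : Module.length R (B.dualSubmodule D ⧸ D.submoduleOf (B.dualSubmodule D)) ≤ 2)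
    (hϖle : ϖ • B.dualSubmodule D ≤ D)
    (hϖlen : Module.length R (D ⧸ (ϖ • B.dualSubmodule D).submoduleOf D) ≤ 2)
    (hτle : D.map (τ : V →ₛₗ[φ] V) ≤ B.dualSubmodule D)
    (hϖτle : ϖ • B.dualSubmodule D ≤ D.map (τ : V →ₛₗ[φ] V)) :
    ∃ L : Submodule R V, Submodule.IsLattice K L ∧ L.map (τ : V →ₛₗ[φ] V) = L ∧
      ((ϖ • B.dualSubmodule L ≤ ϖ • B.dualSubmodule D ∧ ϖ • B.dualSubmodule D ≤ D ∧ D ≤ L ∧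
        L ≤ B.dualSubmodule L ∧ B.dualSubmodule L ≤ B.dualSubmodule D) ∨
       (ϖ • B.dualSubmodule D ≤ ϖ • B.dualSubmodule L ∧ ϖ • B.dualSubmodule L ≤ L ∧ L ≤ D ∧
        D ≤ B.dualSubmodule D ∧ B.dualSubmodule D ≤ B.dualSubmodule L)) := by
  let D' : FullLattice R K V := ⟨D, hD⟩
  have coe_scale_dual (L : FullLattice R K V) :
      (FullLattice.scale hϖ.ne_zero (L.dual hB)).1 = ϖ • B.dualSubmodule L.1 :=
    FullLattice.coe_scale _ _
  have dual_anti {L M : FullLattice R K V} (hLM : L ≤ M) :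
      B.dualSubmodule M.1 ≤ B.dualSubmodule L.1 := FullLattice.dual_antitone hB hLM
  have hlen₁ : LengthLETwo D' (D'.dual hB) := FullLattice.lengthLETwo hlen
  have hlen₂ : LengthLETwo (FullLattice.scale hϖ.ne_zero (D'.dual hB)) D' :=
    FullLattice.lengthLETwo (by rwa [coe_scale_dual])
  obtain ⟨L, hL, h⟩ := exists_fixed_le_dual_or_dual_le
    (FullLattice.dual_strictAnti hB hrefl) (FullLattice.dual_involutive hB hrefl)
    (FullLattice.scale_dual_scale hB hϖ.ne_zero) (FullLattice.mapOrderIso_dual hB hτ)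
    (FullLattice.mapOrderIso_scale hϖ τ) (FullLattice.exists_iterate_scale_le hϖ)
    ⟨⟨Λ, hΛ⟩, Subtype.ext hτΛ⟩ (a := D') hle ((coe_scale_dual D').trans_le hϖle) hτle
    ((coe_scale_dual D').trans_le hϖτle) hlen₁ hlen₂
  refine ⟨L.1, L.2, congrArg Subtype.val hL, ?_⟩
  obtain ⟨hDL, hLL⟩ | ⟨hLD, hLL⟩ := h
  · exact .inl ⟨smul_mono_right ϖ (dual_anti hDL), hϖle, hDL, hLL, dual_anti hDL⟩
  · exact .inr ⟨smul_mono_right ϖ (dual_anti hLD), (coe_scale_dual L).symm.trans_le hLL, hLD, hle,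
      dual_anti hLD⟩

section WittVector

section Symplectic

variable {p : ℕ} [Fact p.Prime] {𝔽 : Type} [Field 𝔽]

theorem isLattice_iff {D : Submodule (Wp p 𝔽) (N0 p 𝔽)} :
    IsLattice p 𝔽 D ↔ Submodule.IsLattice (Kp p 𝔽) D :=
  ⟨fun h => ⟨h.1, h.2⟩, fun h => ⟨h.fg, h.span_eq_top⟩⟩

theorem relLength_eq_length (A B : Submodule (Wp p 𝔽) (N0 p 𝔽)) :
    relLength p 𝔽 A B = Module.length (Wp p 𝔽) (B ⧸ A.submoduleOf B) :=
  (Module.coe_length _ _).symm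

theorem SubD.length_le {d : ℕ} {A B : Submodule (Wp p 𝔽) (N0 p 𝔽)} (h : SubD p 𝔽 d A B) :
    Module.length (Wp p 𝔽) (B ⧸ A.submoduleOf B) ≤ d :=
  WithBot.coe_le_coe.1 ((relLength_eq_length A B).symm.trans h.2).le

variable (p 𝔽) in
/-- The symplectic form `ω` as a bilinear form. -/
def omegaBilin : LinearMap.BilinForm (Kp p 𝔽) (N0 p 𝔽) :=
  LinearMap.mk₂ _ (omegaForm p 𝔽)
    (fun x y z => by simp only [omegaForm, Pi.add_apply]; ring)
    (fun c x y => by simp only [omegaForm, Pi.smul_apply, smul_eq_mul]; ring)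
    (fun x y z => by simp only [omegaForm, Pi.add_apply]; ring)
    (fun c x y => by simp only [omegaForm, Pi.smul_apply, smul_eq_mul]; ring)

theorem omegaBilin_apply (x y : N0 p 𝔽) :
    omegaBilin p 𝔽 x y = x 0 * y 3 - x 3 * y 0 + x 1 * y 2 - x 2 * y 1 :=
  rfl

theorem omegaBilin_swap (x y : N0 p 𝔽) : omegaBilin p 𝔽 y x = -omegaBilin p 𝔽 x y := by
  rw [omegaBilin_apply, omegaBilin_apply]
  ring

theorem omegaBilin_nondegenerate : (omegaBilin p 𝔽).Nondegenerate := by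
  have eq_zero (x : N0 p 𝔽) (hx : ∀ y, omegaBilin p 𝔽 x y = 0) : x = 0 := by
    have h (i : Fin 4) := hx (Pi.single i 1)
    simp only [omegaBilin_apply] at h
    ext i
    fin_cases i
    · simpa using h 3
    · simpa using h 2
    · simpa using h 1
    · simpa using h 0
  refine ⟨eq_zero, fun y hy => eq_zero y fun x => ?_⟩
  rw [omegaBilin_swap, hy, neg_zero]

theorem dualL_eq_dualSubmodule [CharP 𝔽 p] (D : Submodule (Wp p 𝔽) (N0 p 𝔽)) :
    dualL p 𝔽 D = (omegaBilin p 𝔽).dualSubmodule D := by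
  ext x
  simp only [LinearMap.BilinForm.mem_dualSubmodule, Submodule.mem_one]
  rfl

end Symplectic

variable {p 𝔽 σ}

instance : RingHomInvPair (WittVector.frobeniusEquiv p 𝔽 : Wp p 𝔽 →+* Wp p 𝔽)
    ((WittVector.frobeniusEquiv p 𝔽).symm : Wp p 𝔽 →+* Wp p 𝔽) :=
  .of_ringEquiv _

instance : RingHomInvPair ((WittVector.frobeniusEquiv p 𝔽).symm : Wp p 𝔽 →+* Wp p 𝔽)
    (WittVector.frobeniusEquiv p 𝔽 : Wp p 𝔽 →+* Wp p 𝔽) :=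
  .of_ringEquiv_symm _

/-- `τ` as a Frobenius-semilinear automorphism of `N₀`. -/
def tauEquiv (hσ : IsWittFrobenius p 𝔽 σ) :
    N0 p 𝔽 ≃ₛₗ[(WittVector.frobeniusEquiv p 𝔽 : Wp p 𝔽 →+* Wp p 𝔽)] N0 p 𝔽 where
  toFun := tauFun p 𝔽 σ
  invFun := tauFun p 𝔽 σ.symm
  left_inv x := funext fun i => σ.symm_apply_apply (x i)
  right_inv x := funext fun i => σ.apply_symm_apply (x i)
  map_add' x y := funext fun i => map_add σ (x i) (y i)
  map_smul' w x := funext fun i => by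
    simp only [tauFun, Pi.smul_apply, Algebra.smul_def, map_mul, hσ w, RingHom.coe_coe]

theorem tauL_eq_map (hσ : IsWittFrobenius p 𝔽 σ) (D : Submodule (Wp p 𝔽) (N0 p 𝔽)) :
    tauL p 𝔽 σ D = D.map (tauEquiv hσ).toLinearMap :=
  Submodule.span_eq (D.map (tauEquiv hσ).toLinearMap)

theorem IsWittFrobenius.apply_mem_one_iff (hσ : IsWittFrobenius p 𝔽 σ) {a : Kp p 𝔽} :
    σ a ∈ (1 : Submodule (Wp p 𝔽) (Kp p 𝔽)) ↔ a ∈ (1 : Submodule (Wp p 𝔽) (Kp p 𝔽)) := by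
  simp only [Submodule.mem_one]
  rw [(WittVector.frobeniusEquiv p 𝔽).surjective.exists]
  simp only [← hσ _, σ.injective.eq_iff]

theorem omegaBilin_tauEquiv (hσ : IsWittFrobenius p 𝔽 σ) (x y : N0 p 𝔽) :
    omegaBilin p 𝔽 (tauEquiv hσ x) (tauEquiv hσ y) = σ (omegaBilin p 𝔽 x y) := by
  simp only [omegaBilin_apply, map_sub, map_add, map_mul]
  rfl

theorem map_tauEquiv_span_basisFun (hσ : IsWittFrobenius p 𝔽 σ) :
    (Submodule.span (Wp p 𝔽) (Set.range (Pi.basisFun (Kp p 𝔽) (Fin 4)))).map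
      (tauEquiv hσ).toLinearMap =
    Submodule.span (Wp p 𝔽) (Set.range (Pi.basisFun (Kp p 𝔽) (Fin 4))) := by
  have htau (i : Fin 4) : tauEquiv hσ (Pi.basisFun (Kp p 𝔽) (Fin 4) i) =
      Pi.basisFun (Kp p 𝔽) (Fin 4) i := by
    funext j
    simp only [Pi.basisFun_apply]
    exact (Pi.apply_single (fun _ => σ) (fun _ => map_zero σ) i 1 j).trans (by rw [map_one])
  rw [Submodule.map_span, ← Set.range_comp]
  exact congrArg (fun b => Submodule.span (Wp p 𝔽) (Set.range b)) (funext htau)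

end WittVector

/-- For every `D ∈ ℳ(𝔽)` there is a `τ`-stable lattice `L` in `N₀`
with `pL^∨ ⊆ pD^∨ ⊆ D ⊆ L ⊆ L^∨ ⊆ D^∨` or `pD^∨ ⊆ pL^∨ ⊆ L ⊆ D ⊆ D^∨ ⊆ L^∨`. -/
theorem crucial_lemma_quaternionic
    (p : ℕ) [Fact p.Prime] (hp : Odd p)
    (𝔽 : Type) [Field 𝔽] [IsAlgClosed 𝔽] [CharP 𝔽 p]
    (σ : Kp p 𝔽 ≃+* Kp p 𝔽) (hσ : IsWittFrobenius p 𝔽 σ)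
    (D : Submodule (Wp p 𝔽) (N0 p 𝔽)) (hD : memM p 𝔽 σ D) :
    ∃ L : Submodule (Wp p 𝔽) (N0 p 𝔽), IsLattice p 𝔽 L ∧ tauL p 𝔽 σ L = L ∧
      (((p : Wp p 𝔽) • dualL p 𝔽 L ≤ (p : Wp p 𝔽) • dualL p 𝔽 D ∧
        (p : Wp p 𝔽) • dualL p 𝔽 D ≤ D ∧ D ≤ L ∧ L ≤ dualL p 𝔽 L ∧
        dualL p 𝔽 L ≤ dualL p 𝔽 D) ∨
       ((p : Wp p 𝔽) • dualL p 𝔽 D ≤ (p : Wp p 𝔽) • dualL p 𝔽 L ∧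
        (p : Wp p 𝔽) • dualL p 𝔽 L ≤ L ∧ L ≤ D ∧ D ≤ dualL p 𝔽 D ∧
        dualL p 𝔽 D ≤ dualL p 𝔽 L)) := by
  obtain ⟨hlat, hpD, hDD, hpτ, hτD, -⟩ := hD
  simp only [isLattice_iff, dualL_eq_dualSubmodule, tauL_eq_map hσ] at hlat hpD hDD hpτ hτD ⊢
  exact crucial_lemma_quaternionic_general (WittVector.irreducible p) omegaBilin_nondegenerate
    (fun x y h => omegaBilin_swap x y ▸ neg_mem h) (tauEquiv hσ)
    (fun x y => omegaBilin_tauEquiv hσ x y ▸ hσ.apply_mem_one_iff)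
    (isLattice_span_range_basis _) (map_tauEquiv_span_basisFun hσ)
    hlat hDD.1 hDD.length_le hpD.1 hpD.length_le hτD.1 hpτ.1

end
end

section
/- Let L and L′ be τ-stable lattices in N₀ and D ∈ ℳ(𝔽). (a) If L = L^∨, L′ = (L′)^∨, L ≠ L′, and D ⊆ L and D ⊆ L′, then D = L ∩ L′ and p(L ∩ L′)^∨ ⊂² L ∩ L′ ⊂² (L ∩ L′)^∨. (b) If L = pL^∨, L′ = p(L′)^∨, L ≠ L′, and L ⊆ D and L′ ⊆ D, then D = L + L′ and p(L + L′)^∨ ⊂² L + L′ ⊂² (L + L′)^∨. -/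
open Pointwise

noncomputable section

variable (p : ℕ) [Fact p.Prime] (𝔽 : Type) [Field 𝔽] [IsAlgClosed 𝔽] [CharP 𝔽 p]

variable (σ : Kp p 𝔽 ≃+* Kp p 𝔽)

/-!
Duality reverses inclusions, so two distinct lattices `L`, `L'` fixed by `L ↦ L^∨` (or by
`L ↦ pL^∨`) are incomparable, whence `L ∩ L' < L < L + L'`. Duality also puts `L` and `L'` between
`D` and its dual (or between `pD^∨` and `D`), an interval that has no strict chain of four members.
The chain above therefore already fills it, and `D` is one of its ends.
-/

section Order

variable {α : Type*}

theorem three_le_krullDim_of_lt_of_lt_of_lt [Preorder α] {a b c d : α}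
    (hab : a < b) (hbc : b < c) (hcd : c < d) : 3 ≤ Order.krullDim α :=
  Order.le_krullDim_iff.2
    ⟨⟨3, ![a, b, c, d], fun i ↦ by fin_cases i; exacts [hab, hbc, hcd]⟩, rfl⟩

theorem isAntichain_fixedPoints_of_antitone [PartialOrder α] {f : α → α} (hf : Antitone f) :
    IsAntichain (· ≤ ·) (Function.fixedPoints f) := by
  intro a ha b hb hne hab
  have hba : b ≤ a := calc
    b = f b := hb.symm
    _ ≤ f a := hf hab
    _ = a := ha
  exact hne (hab.antisymm hba)

theorem eq_inf_and_eq_sup_of_krullDim_Icc_le_two [Lattice α] {a b c d : α}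
    (hdim : Order.krullDim (Set.Icc c d) ≤ 2) (ha : a ∈ Set.Icc c d) (hb : b ∈ Set.Icc c d)
    (hab : ¬a ≤ b) (hba : ¬b ≤ a) : c = a ⊓ b ∧ d = a ⊔ b := by
  have hc : c ≤ a ⊓ b := le_inf ha.1 hb.1
  have hd : a ⊔ b ≤ d := sup_le ha.2 hb.2
  have hcd : c ≤ d := ha.1.trans ha.2
  let bot : Set.Icc c d := ⟨c, le_rfl, hcd⟩
  let meet : Set.Icc c d := ⟨a ⊓ b, hc, inf_le_left.trans ha.2⟩
  let mid : Set.Icc c d := ⟨a, ha⟩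
  let join : Set.Icc c d := ⟨a ⊔ b, ha.1.trans le_sup_left, hd⟩
  let top : Set.Icc c d := ⟨d, hcd, le_rfl⟩
  have meet_lt_mid : meet < mid := inf_lt_left.2 hab
  have mid_lt_join : mid < join := left_lt_sup.2 hba
  have no_chain : ¬3 ≤ Order.krullDim (Set.Icc c d) := fun h ↦
    absurd (h.trans hdim) (by decide)
  constructor
  · by_contra hne
    have bot_lt_meet : bot < meet := hc.lt_of_ne hne
    exact no_chain (three_le_krullDim_of_lt_of_lt_of_lt bot_lt_meet meet_lt_mid mid_lt_join)
  · by_contra hne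
    have join_lt_top : join < top := hd.lt_of_ne' hne
    exact no_chain (three_le_krullDim_of_lt_of_lt_of_lt meet_lt_mid mid_lt_join join_lt_top)

variable [Lattice α] {f : α → α} {a b d : α}

theorem eq_inf_of_isFixedPt_of_antitone (hf : Antitone f)
    (hdim : Order.krullDim (Set.Icc d (f d)) ≤ 2) (ha : Function.IsFixedPt f a)
    (hb : Function.IsFixedPt f b) (hne : a ≠ b) (hda : d ≤ a) (hdb : d ≤ b) : d = a ⊓ b := by
  have hanti := isAntichain_fixedPoints_of_antitone hf
  have ha' : a ≤ f d := ha.symm.trans_le (hf hda)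
  have hb' : b ≤ f d := hb.symm.trans_le (hf hdb)
  exact (eq_inf_and_eq_sup_of_krullDim_Icc_le_two hdim ⟨hda, ha'⟩ ⟨hdb, hb'⟩
    (hanti ha hb hne) (hanti hb ha hne.symm)).1

theorem eq_sup_of_isFixedPt_of_antitone (hf : Antitone f)
    (hdim : Order.krullDim (Set.Icc (f d) d) ≤ 2) (ha : Function.IsFixedPt f a)
    (hb : Function.IsFixedPt f b) (hne : a ≠ b) (had : a ≤ d) (hbd : b ≤ d) : d = a ⊔ b := by
  have hanti := isAntichain_fixedPoints_of_antitone hf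
  have ha' : f d ≤ a := (hf had).trans_eq ha
  have hb' : f d ≤ b := (hf hbd).trans_eq hb
  exact (eq_inf_and_eq_sup_of_krullDim_Icc_le_two hdim ⟨ha', had⟩ ⟨hb', hbd⟩
    (hanti ha hb hne) (hanti hb ha hne.symm)).2

end Order

theorem krullDim_Icc_le_krullDim_submodule_quotient {R M : Type*} [Ring R] [AddCommGroup M]
    [Module R M] (A B : Submodule R M) :
    Order.krullDim (Set.Icc A B) ≤
      Order.krullDim (Submodule R (B ⧸ A.comap B.subtype)) := by
  let restrict (X : Set.Icc A B) : Set.Ici (A.comap B.subtype) :=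
    ⟨X.1.comap B.subtype, Submodule.comap_mono X.2.1⟩
  have restrict_strictMono : StrictMono restrict := by
    refine Monotone.strictMono_of_injective (fun X Y h ↦ Submodule.comap_mono h) fun X Y h ↦ ?_
    have hmap := congrArg (fun S ↦ S.1.map B.subtype) h
    simpa only [restrict, Submodule.map_comap_subtype, inf_eq_right.2 X.2.2,
      inf_eq_right.2 Y.2.2, Subtype.coe_inj] using hmap
  calc Order.krullDim (Set.Icc A B)
    _ ≤ Order.krullDim (Set.Ici (A.comap B.subtype)) :=
      Order.krullDim_le_of_strictMono restrict restrict_strictMono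
    _ = Order.krullDim (Submodule R (B ⧸ A.comap B.subtype)) :=
      (Order.krullDim_eq_of_orderIso (Submodule.comapMkQRelIso _)).symm

section Dual

variable {p : ℕ} [Fact p.Prime] {𝔽 : Type} [Field 𝔽]

theorem SubD.krullDim_Icc_le {n : ℕ} {A B : Submodule (Wp p 𝔽) (N0 p 𝔽)}
    (h : SubD p 𝔽 n A B) : Order.krullDim (Set.Icc A B) ≤ n :=
  (krullDim_Icc_le_krullDim_submodule_quotient A B).trans_eq h.2

theorem dualL_antitone : Antitone (dualL p 𝔽) :=
  fun _ _ h _ hx d hd ↦ hx d (h hd)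

theorem smul_dualL_antitone (c : Wp p 𝔽) : Antitone fun D ↦ c • dualL p 𝔽 D :=
  fun _ _ h ↦ smul_mono_right c (dualL_antitone h)

theorem intersection_of_lattice_strata_general (c : Wp p 𝔽)
    (D : Submodule (Wp p 𝔽) (N0 p 𝔽))
    (hcD : SubD p 𝔽 2 (c • dualL p 𝔽 D) D) (hD : SubD p 𝔽 2 D (dualL p 𝔽 D)) :
    (∀ L L' : Submodule (Wp p 𝔽) (N0 p 𝔽),
      L = dualL p 𝔽 L → L' = dualL p 𝔽 L' → L ≠ L' → D ≤ L → D ≤ L' →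
      D = L ⊓ L' ∧
      SubD p 𝔽 2 (c • dualL p 𝔽 (L ⊓ L')) (L ⊓ L') ∧
      SubD p 𝔽 2 (L ⊓ L') (dualL p 𝔽 (L ⊓ L'))) ∧
    (∀ L L' : Submodule (Wp p 𝔽) (N0 p 𝔽),
      L = c • dualL p 𝔽 L → L' = c • dualL p 𝔽 L' → L ≠ L' → L ≤ D → L' ≤ D →
      D = L ⊔ L' ∧
      SubD p 𝔽 2 (c • dualL p 𝔽 (L ⊔ L')) (L ⊔ L') ∧
      SubD p 𝔽 2 (L ⊔ L') (dualL p 𝔽 (L ⊔ L'))) := by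
  constructor
  · intro L L' hL hL' hne hDL hDL'
    have hinf : D = L ⊓ L' := eq_inf_of_isFixedPt_of_antitone dualL_antitone
      hD.krullDim_Icc_le hL.symm hL'.symm hne hDL hDL'
    exact ⟨hinf, hinf ▸ hcD, hinf ▸ hD⟩
  · intro L L' hL hL' hne hLD hLD'
    have hsup : D = L ⊔ L' := eq_sup_of_isFixedPt_of_antitone (smul_dualL_antitone c)
      hcD.krullDim_Icc_le hL.symm hL'.symm hne hLD hLD'
    exact ⟨hsup, hsup ▸ hcD, hsup ▸ hD⟩

end Dual

/-- Let `D ∈ ℳ(𝔽)`.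
(a) If `L, L′` are distinct `τ`-stable lattices with `L = L^∨`, `L′ = (L′)^∨` and
`D ⊆ L`, `D ⊆ L′`, then `D = L ∩ L′` and `p(L ∩ L′)^∨ ⊂² L ∩ L′ ⊂² (L ∩ L′)^∨`.
(b) If `L, L′` are distinct `τ`-stable lattices with `L = pL^∨`, `L′ = p(L′)^∨` and
`L ⊆ D`, `L′ ⊆ D`, then `D = L + L′` and `p(L + L′)^∨ ⊂² L + L′ ⊂² (L + L′)^∨`. -/
theorem intersection_of_lattice_strata
    (p : ℕ) [Fact p.Prime] (hp : Odd p)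
    (𝔽 : Type) [Field 𝔽] [IsAlgClosed 𝔽] [CharP 𝔽 p]
    (σ : Kp p 𝔽 ≃+* Kp p 𝔽) (hσ : IsWittFrobenius p 𝔽 σ)
    (D : Submodule (Wp p 𝔽) (N0 p 𝔽)) (hD : memM p 𝔽 σ D) :
    (∀ L L' : Submodule (Wp p 𝔽) (N0 p 𝔽),
      IsLattice p 𝔽 L → tauL p 𝔽 σ L = L → IsLattice p 𝔽 L' → tauL p 𝔽 σ L' = L' →
      L = dualL p 𝔽 L → L' = dualL p 𝔽 L' → L ≠ L' → D ≤ L → D ≤ L' →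
      D = L ⊓ L' ∧
      SubD p 𝔽 2 ((p : Wp p 𝔽) • dualL p 𝔽 (L ⊓ L')) (L ⊓ L') ∧
      SubD p 𝔽 2 (L ⊓ L') (dualL p 𝔽 (L ⊓ L'))) ∧
    (∀ L L' : Submodule (Wp p 𝔽) (N0 p 𝔽),
      IsLattice p 𝔽 L → tauL p 𝔽 σ L = L → IsLattice p 𝔽 L' → tauL p 𝔽 σ L' = L' →
      L = (p : Wp p 𝔽) • dualL p 𝔽 L → L' = (p : Wp p 𝔽) • dualL p 𝔽 L' → L ≠ L' →
      L ≤ D → L' ≤ D →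
      D = L ⊔ L' ∧
      SubD p 𝔽 2 ((p : Wp p 𝔽) • dualL p 𝔽 (L ⊔ L')) (L ⊔ L') ∧
      SubD p 𝔽 2 (L ⊔ L') (dualL p 𝔽 (L ⊔ L'))) := by
  have ⟨hinf, hsup⟩ := intersection_of_lattice_strata_general (p : Wp p 𝔽) D hD.2.1 hD.2.2.1
  exact ⟨fun L L' _ _ _ _ ↦ hinf L L', fun L L' _ _ _ _ ↦ hsup L L'⟩

end
end
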